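/- Let $F$ be a field, let $K < H$ be positive integers, and let $G$ be a $K \times H$ matrix over $F$ such that every set of $K$ columns of $G$ is linearly independent. Define the linear map $\Phi : F^{H-K} \times F^{K} \to F^{H}$ by $\Phi(w,x)_j = w_j + (xG)_j$ for $1 \le j \le H-K$ and $\Phi(w,x)_j = (xG)_j$ for $H-K < j \le H$. Then $\Phi$ is bijective; in particular, the message $w$ is uniquely determined by the transmitted vector $\Phi(w,x)$. -/

import Mathlib

/-!
Call `B` the square block formed by the last `K` columns of `G`. Up to the shear
`(w, x) ↦ (w + x A, x)`, where `A` is the block of the remaining columns, the encoding map is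
`(w, x) ↦ (w, x B)`. Hence it is bijective exactly when `B` is invertible.
-/

open Finset

theorem bijective_add_prodMk_iff {A B C : Type*} [AddGroup A] [Nonempty B] (f : B → A)
    (g : B → C) :
    Function.Bijective (fun p : A × B => (p.1 + f p.2, g p.2)) ↔ Function.Bijective g := by
  let shear : A × B ≃ A × B :=
    (Equiv.prodComm A B).trans
      (((Equiv.refl B).prodShear fun b => Equiv.addRight (f b)).trans (Equiv.prodComm B A))
  calc
    _ ↔ Function.Bijective (Prod.map (id : A → A) g ∘ shear) := Iff.rfl
    _ ↔ Function.Bijective (Prod.map (id : A → A) g) := shear.bijective_comp _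
    _ ↔ Function.Bijective g := Prod.map_bijective.trans (and_iff_right Function.bijective_id)

theorem append_add_eq_dite {α : Type*} [Add α] {m n : ℕ} (w : Fin m → α) (v : Fin (m + n) → α) :
    Fin.append (w + v ∘ Fin.castAdd n) (v ∘ Fin.natAdd m) =
      fun j : Fin (m + n) => if h : (j : ℕ) < m then w ⟨j, h⟩ + v j else v j := by
  funext j
  induction j using Fin.addCases <;> simp

theorem vecMul_bijective_iff_isUnit {R n : Type*} [CommRing R] [Fintype n] [DecidableEq n]
    {A : Matrix n n R} : Function.Bijective A.vecMul ↔ IsUnit A :=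
  ⟨fun h => Matrix.vecMul_surjective_iff_isUnit.1 h.surjective,
    fun h => ⟨Matrix.vecMul_injective_of_isUnit h, Matrix.vecMul_surjective_iff_isUnit.2 h⟩⟩

theorem isUnit_submatrix_of_linearIndependent_cols {F m n : Type*} [Field F] [Fintype n]
    [DecidableEq n] {G : Matrix n m F}
    (hG : ∀ S : Finset m, S.card = Fintype.card n →
      LinearIndependent F (fun j : S => fun i : n => G i (j : m)))
    {e : n → m} (he : Function.Injective e) : IsUnit (G.submatrix id e) := by
  classical
  rw [← Matrix.linearIndependent_cols_iff_isUnit]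
  have hS : (univ.image e).card = Fintype.card n := card_image_of_injective univ he
  refine (hG _ hS).comp (fun k => ⟨e k, mem_image_of_mem e (mem_univ k)⟩) fun a b hab => ?_
  exact he (congrArg Subtype.val hab)

theorem encoding_map_bijective_general {R : Type*} [CommRing R] {M K H : ℕ} (hH : M + K = H)
    (G : Matrix (Fin K) (Fin H) R) :
    Function.Bijective (fun p : (Fin M → R) × (Fin K → R) =>
      fun j : Fin H =>
        if h : (j : ℕ) < M then p.1 ⟨(j : ℕ), h⟩ + Matrix.vecMul p.2 G j
        else Matrix.vecMul p.2 G j) ↔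
      IsUnit (G.submatrix id (Fin.cast hH ∘ Fin.natAdd M)) := by
  subst hH
  let A : Matrix (Fin K) (Fin M) R := G.submatrix id (Fin.castAdd K)
  let B : Matrix (Fin K) (Fin K) R := G.submatrix id (Fin.natAdd M)
  calc
    _ ↔ Function.Bijective (Fin.appendEquiv M K ∘
          fun p : (Fin M → R) × (Fin K → R) => (p.1 + A.vecMul p.2, B.vecMul p.2)) :=
        iff_of_eq <| congrArg Function.Bijective <| funext fun p =>
          (append_add_eq_dite p.1 (G.vecMul p.2)).symm
    _ ↔ Function.Bijective
          fun p : (Fin M → R) × (Fin K → R) => (p.1 + A.vecMul p.2, B.vecMul p.2) :=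
        (Fin.appendEquiv M K).comp_bijective _
    _ ↔ Function.Bijective B.vecMul := bijective_add_prodMk_iff A.vecMul B.vecMul
    _ ↔ IsUnit B := vecMul_bijective_iff_isUnit

theorem encoding_map_bijective
    {F : Type*} [Field F] {K H : ℕ} (hK : 0 < K) (hKH : K < H)
    (G : Matrix (Fin K) (Fin H) F)
    (hG : ∀ S : Finset (Fin H), S.card = K →
      LinearIndependent F (fun j : S => fun i : Fin K => G i (j : Fin H))) :
    Function.Bijective (fun p : (Fin (H - K) → F) × (Fin K → F) =>
      fun j : Fin H =>
        if h : (j : ℕ) < H - K then p.1 ⟨(j : ℕ), h⟩ + Matrix.vecMul p.2 G j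
        else Matrix.vecMul p.2 G j) :=
  (encoding_map_bijective_general (Nat.sub_add_cancel hKH.le) G).2 <|
    isUnit_submatrix_of_linearIndependent_cols
      (fun S hS => hG S (hS.trans (Fintype.card_fin K)))
      ((Fin.cast_injective _).comp (Fin.natAdd_injective K (H - K)))
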